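/- In the setting of the approximating maps τ_n, let n₀ ≥ N satisfy a_{n₀} + D₁ < 1 and let n ≥ n₀. Then for every non-negative, non-increasing f ∈ L¹(I,λ) and every k ≥ 1, the k-th iterate of the Frobenius–Perron operator satisfies ess sup (P_{τ_n}^k f) ≤ (a_{n₀} + D₁)^k · ess sup f + (D / (1 − (a_{n₀} + D₁))) · ‖f‖₁. -/

import Mathlib

open MeasureTheory Set Filter

/-- Lebesgue measure on the unit interval `I = [0,1]`. -/
noncomputable def lam : MeasureTheory.Measure ℝ := MeasureTheory.volume.restrict (Set.Icc 0 1)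

/-- A piecewise convex map `τ` on `[0,1]` with countably many branches, whose partition
points form a strictly decreasing sequence `1 = a 0 > a 1 > ⋯` tending to `0`; on each
`[a (m+1), a m)` the map is continuous, convex and differentiable, vanishes at the left
endpoint, and has right derivative `d (m+1) = τ'(a (m+1)) > 0` there; there is `N ≥ 1`
with `D₁ = ∑_{m=N+1}^∞ 1/τ'(a m) < 1` and `C = ∑_{m=1}^∞ 1/τ'(a m) < ∞`. -/
structure PCApprox (τ : ℝ → ℝ) (a d : ℕ → ℝ) (N : ℕ) : Prop where
  mapsTo : Set.MapsTo τ (Set.Icc 0 1) (Set.Icc 0 1)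
  a_zero : a 0 = 1
  a_anti : StrictAnti a
  a_lim : Filter.Tendsto a Filter.atTop (nhds 0)
  cont : ∀ m : ℕ, ContinuousOn τ (Set.Ico (a (m+1)) (a m))
  conv : ∀ m : ℕ, ConvexOn ℝ (Set.Ico (a (m+1)) (a m)) τ
  diff : ∀ m : ℕ, ∀ x ∈ Set.Ico (a (m+1)) (a m),
    DifferentiableWithinAt ℝ τ (Set.Ico (a (m+1)) (a m)) x
  map_a : ∀ m : ℕ, τ (a (m+1)) = 0
  deriv_a : ∀ m : ℕ, HasDerivWithinAt τ (d (m+1)) (Set.Ici (a (m+1))) (a (m+1))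
  d_pos : ∀ m : ℕ, 0 < d (m+1)
  N_pos : 1 ≤ N
  sum_d : Summable fun m => 1 / d (m+1)
  D₁_lt : (∑' m : ℕ, 1 / d (m + N + 1)) < 1

/-- `D₁ = ∑_{m=N+1}^∞ 1/τ'(a m)`. -/
noncomputable def D₁ (d : ℕ → ℝ) (N : ℕ) : ℝ := ∑' m : ℕ, 1 / d (m + N + 1)

/-- `C = ∑_{m=1}^∞ 1/τ'(a m)`. -/
noncomputable def Cconst (d : ℕ → ℝ) : ℝ := ∑' m : ℕ, 1 / d (m + 1)

/-- `D = ∑_{m=1}^N 1/(a m · τ'(a m))`. -/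
noncomputable def Dconst (a d : ℕ → ℝ) (N : ℕ) : ℝ :=
  ∑ m ∈ Finset.range N, 1 / (a (m+1) * d (m+1))

/-- The approximating map `τ_n`: `τ_n x = x / a n` for `x < a n`, and `τ_n x = τ x`
for `a n ≤ x`. -/
noncomputable def tauN (τ : ℝ → ℝ) (a : ℕ → ℝ) (n : ℕ) : ℝ → ℝ :=
  fun x => if x < a n then x / a n else τ x

/-- Essential supremum (with respect to `λ` on `[0,1]`) of a real function, valued in `ℝ≥0∞`. -/
noncomputable def esssup (f : ℝ → ℝ) : ENNReal := essSup (fun x => ENNReal.ofReal (f x)) lam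

/-!
Work with the distribution function `F t = ∫₀ᵗ g` instead of the density `g`: up to null sets, `g`
is non-negative and non-increasing exactly when `F` is monotone and concave on `[0, 1]`. If `φ` is
the inverse of a convex branch on `[u, v)` vanishing at `u` with slope `d` there, then `φ` is
monotone and concave with `φ t ≤ u + t / d`, and the Frobenius–Perron operator acts on
distribution functions by `F ↦ ∑ (F ∘ φ - F u)`, which preserves monotone concave functions.

If `F t ≤ L t` on `[0, 1]`, concavity of `F` yields `F (φ t) - F u ≤ L t / d`, and if `0 < u` also
`F (φ t) - F u ≤ F u / u * (t / d)`. Using the latter on the first `N` branches and the former on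
the others bounds the slope at `0` of the new distribution function, which is the essential
supremum of its density. The map `τ_n` has finitely many branches, the last being the linear one
on `[0, a n)` with slope `1 / a n`.
-/

section DistributionFunction

variable {F f : ℝ → ℝ} {a b x y L : ℝ}

theorem sub_le_div_mul_sub_of_concaveOn (hF : ConcaveOn ℝ (Icc 0 b) F) (h0 : F 0 = 0)
    (hx : 0 < x) (hxy : x ≤ y) (hy : y ≤ b) : F y - F x ≤ F x / x * (y - x) := by
  rcases hxy.eq_or_lt with rfl | hlt
  · simp
  · have hslope := hF.slope_anti_adjacent ⟨le_rfl, by linarith⟩ ⟨by linarith, hy⟩ hx hlt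
    rwa [h0, sub_zero, sub_zero, div_le_iff₀ (by linarith)] at hslope

theorem sub_le_mul_sub_of_concaveOn (hF : ConcaveOn ℝ (Icc 0 b) F) (h0 : F 0 = 0)
    (hL : ∀ t ∈ Icc 0 b, F t ≤ L * t) (hx : 0 ≤ x) (hxy : x ≤ y) (hy : y ≤ b) :
    F y - F x ≤ L * (y - x) := by
  rcases hx.eq_or_lt with rfl | hx
  · simpa [h0] using hL y ⟨hxy, hy⟩
  · calc F y - F x ≤ F x / x * (y - x) := sub_le_div_mul_sub_of_concaveOn hF h0 hx hxy hy
      _ ≤ L * (y - x) := by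
        refine mul_le_mul_of_nonneg_right ?_ (sub_nonneg.mpr hxy)
        exact (div_le_iff₀ hx).mpr (hL x ⟨hx.le, hxy.trans hy⟩)

theorem concaveOn_integral_of_antitoneOn (hf : AntitoneOn f (Icc a b)) :
    ConcaveOn ℝ (Icc a b) fun t => ∫ x in a..t, f x := by
  have hint {x y : ℝ} (hx : x ∈ Icc a b) (hy : y ∈ Icc a b) : IntervalIntegrable f volume x y :=
    (hf.mono (uIcc_subset_Icc hx hy)).intervalIntegrable
  refine concaveOn_of_slope_anti_adjacent (convex_Icc a b) fun {x y z} hx hz hxy hyz => ?_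
  have ha : a ∈ Icc a b := ⟨le_rfl, hx.1.trans hx.2⟩
  have hy : y ∈ Icc a b := ⟨hx.1.trans hxy.le, hyz.le.trans hz.2⟩
  have h_right : ∫ w in y..z, f w ≤ f y * (z - y) := by
    refine (intervalIntegral.integral_mono_on hyz.le (hint hy hz) intervalIntegrable_const
      fun w hw => hf hy ⟨hy.1.trans hw.1, hw.2.trans hz.2⟩ hw.1).trans_eq ?_
    simp [mul_comm]
  have h_left : f y * (y - x) ≤ ∫ w in x..y, f w := by
    refine Eq.trans_le ?_ (intervalIntegral.integral_mono_on hxy.le intervalIntegrable_const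
      (hint hx hy) fun w hw => hf ⟨hx.1.trans hw.1, hw.2.trans hy.2⟩ hy hw.2)
    simp [mul_comm]
  rw [intervalIntegral.integral_interval_sub_left (hint ha hz) (hint ha hy),
    intervalIntegral.integral_interval_sub_left (hint ha hy) (hint ha hx)]
  exact ((div_le_iff₀ (sub_pos.mpr hyz)).mpr h_right).trans
    ((le_div_iff₀ (sub_pos.mpr hxy)).mpr h_left)

theorem monotoneOn_integral_of_nonneg (hf : IntervalIntegrable f volume a b)
    (h0 : ∀ x ∈ Icc a b, 0 ≤ f x) : MonotoneOn (fun t => ∫ x in a..t, f x) (Icc a b) := by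
  intro s hs t ht hst
  have hint {y : ℝ} (hy : y ∈ Icc a b) : IntervalIntegrable f volume a y :=
    hf.mono_set (uIcc_subset_uIcc left_mem_uIcc (Icc_subset_uIcc hy))
  rw [← sub_nonneg, intervalIntegral.integral_interval_sub_left (hint ht) (hint hs)]
  exact intervalIntegral.integral_nonneg hst fun x hx => h0 x ⟨hs.1.trans hx.1, hx.2.trans ht.2⟩

theorem ae_le_of_concaveOn_integral (hf : IntervalIntegrable f volume a b)
    (hF : ConcaveOn ℝ (Icc a b) fun t => ∫ x in a..t, f x)
    (hL : ∀ t ∈ Icc a b, ∫ x in a..t, f x ≤ L * (t - a)) :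
    ∀ᵐ x ∂volume.restrict (Icc a b), f x ≤ L := by
  rw [← restrict_Ioo_eq_restrict_Icc, ae_restrict_iff' measurableSet_Ioo]
  filter_upwards [hf.ae_hasDerivAt_integral] with x hderiv hx
  have hxI : x ∈ Icc a b := Ioo_subset_Icc_self hx
  have hab : a ≤ b := hxI.1.trans hxI.2
  have hle := hF.le_slope_of_hasDerivAt ⟨le_rfl, hab⟩ hxI hx.1
    (hderiv (Icc_subset_uIcc hxI) a left_mem_uIcc)
  rw [slope_def_field, intervalIntegral.integral_same, sub_zero] at hle
  exact hle.trans ((div_le_iff₀ (sub_pos.mpr hx.1)).mpr (hL x hxI))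

end DistributionFunction

section Branch

variable {T : ℝ → ℝ} {u v d t x : ℝ}

/-- A convex branch of a map: `T` is convex on `[u, v)`, vanishes at `u` and has right derivative
`d > 0` there. -/
structure IsConvexBranch (T : ℝ → ℝ) (u v d : ℝ) : Prop where
  lt : u < v
  convexOn : ConvexOn ℝ (Ico u v) T
  map_left : T u = 0
  hasDerivWithinAt : HasDerivWithinAt T d (Ico u v) u
  pos : 0 < d

/-- The inverse of the branch of `T` on `[u, v)`, extended by `v` to values exceeding those taken on
the branch. -/
noncomputable def branchInv (T : ℝ → ℝ) (u v t : ℝ) : ℝ := sSup {x ∈ Ico u v | T x ≤ t}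

theorem le_branchInv (hx : x ∈ Ico u v) (hxt : T x ≤ t) : x ≤ branchInv T u v t :=
  le_csSup ⟨v, fun _ hy => hy.1.2.le⟩ ⟨hx, hxt⟩

namespace IsConvexBranch

theorem mul_sub_le (h : IsConvexBranch T u v d) (hx : x ∈ Ico u v) : d * (x - u) ≤ T x := by
  rcases hx.1.eq_or_lt with rfl | hux
  · simp [h.map_left]
  · have hslope := h.convexOn.le_slope_of_hasDerivWithinAt ⟨le_rfl, h.lt⟩ hx hux h.hasDerivWithinAt
    rwa [slope_def_field, h.map_left, sub_zero, le_div_iff₀ (sub_pos.mpr hux)] at hslope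

theorem nonneg (h : IsConvexBranch T u v d) (hx : x ∈ Ico u v) : 0 ≤ T x :=
  (mul_nonneg h.pos.le (sub_nonneg.mpr hx.1)).trans (h.mul_sub_le hx)

theorem left_mem_sublevel (h : IsConvexBranch T u v d) (ht : 0 ≤ t) :
    u ∈ {x ∈ Ico u v | T x ≤ t} :=
  ⟨⟨le_rfl, h.lt⟩, h.map_left.trans_le ht⟩

theorem branchInv_mem_Icc (h : IsConvexBranch T u v d) (ht : 0 ≤ t) :
    branchInv T u v t ∈ Icc u v :=
  ⟨le_branchInv (h.left_mem_sublevel ht).1 (h.left_mem_sublevel ht).2,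
    csSup_le ⟨u, h.left_mem_sublevel ht⟩ fun _ hx => hx.1.2.le⟩

theorem branchInv_sub_le (h : IsConvexBranch T u v d) (ht : 0 ≤ t) :
    branchInv T u v t - u ≤ t / d := by
  rw [sub_le_iff_le_add]
  refine csSup_le ⟨u, h.left_mem_sublevel ht⟩ fun x hx => ?_
  rw [← sub_le_iff_le_add, le_div_iff₀' h.pos]
  exact (h.mul_sub_le hx.1).trans hx.2

theorem monotoneOn_branchInv (h : IsConvexBranch T u v d) :
    MonotoneOn (branchInv T u v) (Ici 0) := fun _ hs _ _ hst =>
  csSup_le ⟨u, h.left_mem_sublevel hs⟩ fun _ hx => le_branchInv hx.1 (hx.2.trans hst)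

theorem concaveOn_branchInv (h : IsConvexBranch T u v d) :
    ConcaveOn ℝ (Ici 0) (branchInv T u v) := by
  refine ⟨convex_Ici 0, fun s hs t ht p q hp hq hpq => le_of_forall_pos_sub_le fun ε hε => ?_⟩
  obtain ⟨x, ⟨hx, hxs⟩, hx_gt⟩ := exists_lt_of_lt_csSup ⟨u, h.left_mem_sublevel hs⟩
    (show branchInv T u v s - ε < sSup _ from sub_lt_self _ hε)
  obtain ⟨y, ⟨hy, hyt⟩, hy_gt⟩ := exists_lt_of_lt_csSup ⟨u, h.left_mem_sublevel ht⟩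
    (show branchInv T u v t - ε < sSup _ from sub_lt_self _ hε)
  have hT : T (p • x + q • y) ≤ p • s + q • t :=
    (h.convexOn.2 hx hy hp hq hpq).trans (by gcongr)
  calc p • branchInv T u v s + q • branchInv T u v t - ε
      = p • (branchInv T u v s - ε) + q • (branchInv T u v t - ε) := by
        simp only [smul_eq_mul]
        linear_combination ε * hpq
    _ ≤ p • x + q • y := by gcongr
    _ ≤ branchInv T u v (p • s + q • t) := le_branchInv (h.convexOn.1 hx hy hp hq hpq) hT

theorem le_iff_le_branchInv (h : IsConvexBranch T u v d) (ht : 0 ≤ t) (hx : x ∈ Ico u v)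
    (hne : x ≠ branchInv T u v t) : T x ≤ t ↔ x ≤ branchInv T u v t := by
  refine ⟨le_branchInv hx, fun hle => ?_⟩
  obtain ⟨y, hy, hxy⟩ := exists_lt_of_lt_csSup ⟨u, h.left_mem_sublevel ht⟩ (hle.lt_of_ne hne)
  exact ((h.convexOn.convex_le t).ordConnected.out (h.left_mem_sublevel ht) hy ⟨hx.1, hxy.le⟩).2

end IsConvexBranch

end Branch

section PiecewiseConvex

variable {T F g g' : ℝ → ℝ} {b d : ℕ → ℝ} {p N : ℕ} {L t : ℝ}

/-- A map of `[0, 1)` with finitely many convex branches: the partition points are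
`1 = b 0 > b 1 > ⋯ > b p = 0`, and `d (m + 1)` is the right derivative at `b (m + 1)` of the branch
on `[b (m + 1), b m)`. Values above `1` are allowed, so that mass may leave `[0, 1]`. -/
structure IsPiecewiseConvex (T : ℝ → ℝ) (b d : ℕ → ℝ) (p : ℕ) : Prop where
  zero : b 0 = 1
  last : b p = 0
  branch : ∀ m < p, IsConvexBranch T (b (m + 1)) (b m) (d (m + 1))

/-- The distribution function on `[0, 1]` of the density `g`. -/
noncomputable def cumulative (g : ℝ → ℝ) (t : ℝ) : ℝ := ∫ x in (0 : ℝ)..t, g x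

/-- The action on distribution functions of the Frobenius–Perron operator of a map with `p` convex
branches. -/
noncomputable def cumulativeTransfer (T : ℝ → ℝ) (b : ℕ → ℝ) (p : ℕ) (F : ℝ → ℝ) (t : ℝ) : ℝ :=
  ∑ m ∈ Finset.range p, (F (branchInv T (b (m + 1)) (b m) t) - F (b (m + 1)))

/-- `g'` is a version of the image of `g` under the Frobenius–Perron operator of `T`. -/
def IsFrobeniusPerron (T g g' : ℝ → ℝ) : Prop :=
  ∀ A : Set ℝ, MeasurableSet A → A ⊆ Icc 0 1 → ∫ x in A, g' x ∂lam = ∫ x in T ⁻¹' A, g x ∂lam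

/-- The densities on `[0, 1]` that agree almost everywhere with a non-negative non-increasing
function, expressed through the distribution function so that no such version has to be chosen. -/
structure HasConcaveCumulative (g : ℝ → ℝ) : Prop where
  integrable : Integrable g lam
  concaveOn : ConcaveOn ℝ (Icc 0 1) (cumulative g)
  monotoneOn : MonotoneOn (cumulative g) (Icc 0 1)

theorem cumulative_zero (g : ℝ → ℝ) : cumulative g 0 = 0 := intervalIntegral.integral_same

theorem intervalIntegrable_of_integrable_lam (hg : Integrable g lam) :
    IntervalIntegrable g volume 0 1 :=
  (intervalIntegrable_iff_integrableOn_Icc_of_le zero_le_one).mpr hg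

theorem setIntegral_Ioc_lam (hg : Integrable g lam) {s : ℝ} (hs : 0 ≤ s) (hst : s ≤ t)
    (ht : t ≤ 1) : ∫ x in Ioc s t, g x ∂lam = cumulative g t - cumulative g s := by
  have hint {x : ℝ} (hx : x ∈ Icc (0 : ℝ) 1) : IntervalIntegrable g volume 0 x :=
    (intervalIntegrable_of_integrable_lam hg).mono_set
      (uIcc_subset_uIcc left_mem_uIcc (Icc_subset_uIcc hx))
  rw [cumulative, cumulative, intervalIntegral.integral_interval_sub_left
    (hint ⟨hs.trans hst, ht⟩) (hint ⟨hs, hst.trans ht⟩), intervalIntegral.integral_of_le hst, lam,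
    Measure.restrict_restrict_of_subset (Ioc_subset_Icc_self.trans (Icc_subset_Icc hs ht))]

theorem cumulative_le_of_ae_le (hg : Integrable g lam) (hL : ∀ᵐ x ∂lam, g x ≤ L)
    (ht : t ∈ Icc (0 : ℝ) 1) : cumulative g t ≤ L * t := by
  have hint : IntervalIntegrable g volume 0 t :=
    (intervalIntegrable_of_integrable_lam hg).mono_set
      (uIcc_subset_uIcc left_mem_uIcc (Icc_subset_uIcc ht))
  refine (intervalIntegral.integral_mono_ae_restrict ht.1 hint intervalIntegrable_const
    (ae_restrict_of_ae_restrict_of_subset (Icc_subset_Icc_right ht.2) hL)).trans_eq ?_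
  simp [mul_comm]

theorem cumulative_one_le_integral_abs (hg : Integrable g lam) :
    cumulative g 1 ≤ ∫ x, |g x| ∂lam := by
  calc cumulative g 1 = ∫ x in Ioc 0 1, g x ∂lam := by
        rw [setIntegral_Ioc_lam hg le_rfl zero_le_one le_rfl, cumulative_zero, sub_zero]
    _ ≤ ∫ x in Ioc 0 1, |g x| ∂lam :=
        setIntegral_mono hg.integrableOn hg.abs.integrableOn fun x => le_abs_self (g x)
    _ ≤ ∫ x, |g x| ∂lam := setIntegral_le_integral hg.abs (ae_of_all _ fun x => abs_nonneg (g x))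

namespace HasConcaveCumulative

theorem of_antitoneOn (hg : Integrable g lam) (h0 : ∀ x ∈ Icc (0 : ℝ) 1, 0 ≤ g x)
    (hanti : AntitoneOn g (Icc 0 1)) : HasConcaveCumulative g where
  integrable := hg
  concaveOn := concaveOn_integral_of_antitoneOn hanti
  monotoneOn := monotoneOn_integral_of_nonneg (intervalIntegrable_of_integrable_lam hg) h0

theorem cumulative_one_nonneg (hg : HasConcaveCumulative g) : 0 ≤ cumulative g 1 := by
  rw [← cumulative_zero g]
  exact hg.monotoneOn ⟨le_rfl, zero_le_one⟩ ⟨zero_le_one, le_rfl⟩ zero_le_one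

theorem ae_le (hg : HasConcaveCumulative g) (hL : ∀ t ∈ Icc (0 : ℝ) 1, cumulative g t ≤ L * t) :
    ∀ᵐ x ∂lam, g x ≤ L :=
  ae_le_of_concaveOn_integral (intervalIntegrable_of_integrable_lam hg.integrable) hg.concaveOn
    fun t ht => (hL t ht).trans_eq (by rw [sub_zero])

end HasConcaveCumulative

namespace IsPiecewiseConvex

theorem strictAntiOn (hT : IsPiecewiseConvex T b d p) : StrictAntiOn b (Iic p) :=
  strictAntiOn_Iic_of_succ_lt fun m hm => (hT.branch m hm).lt

theorem mem_Icc (hT : IsPiecewiseConvex T b d p) {m : ℕ} (hm : m ≤ p) : b m ∈ Icc (0 : ℝ) 1 :=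
  ⟨hT.last ▸ hT.strictAntiOn.antitoneOn hm self_mem_Iic hm,
    hT.zero ▸ hT.strictAntiOn.antitoneOn (Nat.zero_le p) hm (Nat.zero_le m)⟩

theorem pos (hT : IsPiecewiseConvex T b d p) {m : ℕ} (hm : m < p) : 0 < b m :=
  hT.last ▸ hT.strictAntiOn hm.le self_mem_Iic hm

theorem branchInv_mem_Icc (hT : IsPiecewiseConvex T b d p) {m : ℕ} (hm : m < p) (ht : 0 ≤ t) :
    branchInv T (b (m + 1)) (b m) t ∈ Icc (0 : ℝ) 1 :=
  Icc_subset_Icc (hT.mem_Icc hm).1 (hT.mem_Icc hm.le).2 ((hT.branch m hm).branchInv_mem_Icc ht)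

theorem exists_mem_Ico (hT : IsPiecewiseConvex T b d p) {x : ℝ} (hx : x ∈ Ico (0 : ℝ) 1) :
    ∃ m < p, x ∈ Ico (b (m + 1)) (b m) := by
  have hex : ∃ m, b m ≤ x := ⟨p, hT.last.trans_le hx.1⟩
  obtain ⟨m, hm⟩ : ∃ m, Nat.find hex = m + 1 :=
    Nat.exists_eq_succ_of_ne_zero fun h0 =>
      (hT.zero ▸ h0 ▸ Nat.find_spec hex : (1 : ℝ) ≤ x).not_gt hx.2
  refine ⟨m, ?_, hm ▸ Nat.find_spec hex, not_le.mp (Nat.find_min hex (by omega))⟩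
  have := Nat.find_min' hex (hT.last.trans_le hx.1)
  omega

theorem preimage_Icc_ae_eq (hT : IsPiecewiseConvex T b d p) (ht : 0 ≤ t) :
    T ⁻¹' Icc 0 t =ᵐ[lam]
      (⋃ m ∈ Finset.range p, Ioc (b (m + 1)) (branchInv T (b (m + 1)) (b m) t) : Set ℝ) := by
  have hexceptional : (range b ∪ range fun m => branchInv T (b (m + 1)) (b m) t).Countable :=
    (countable_range _).union (countable_range _)
  have hae : ∀ᵐ x ∂lam, x ∉ range b ∪ range fun m => branchInv T (b (m + 1)) (b m) t :=
    ae_restrict_of_ae (hexceptional.ae_notMem volume)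
  filter_upwards [hae, ae_restrict_mem measurableSet_Icc] with x hx hxI
  simp only [mem_union, mem_range, not_or, not_exists] at hx
  obtain ⟨hxb, hxinv⟩ := hx
  have hx1 : x < 1 := hxI.2.lt_of_ne fun h => hxb 0 (hT.zero.trans h.symm)
  change (x ∈ T ⁻¹' Icc 0 t) = (x ∈ ⋃ m ∈ Finset.range p, _)
  simp only [mem_preimage, mem_iUnion, Finset.mem_range, mem_Ioc, exists_prop,
    eq_iff_iff]
  constructor
  · rintro ⟨-, hTx⟩
    obtain ⟨m, hm, hxm⟩ := hT.exists_mem_Ico ⟨hxI.1, hx1⟩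
    exact ⟨m, hm, hxm.1.lt_of_ne (hxb _), le_branchInv hxm hTx⟩
  · rintro ⟨m, hm, hgt, hle⟩
    have hbranch := hT.branch m hm
    have hxm : x ∈ Ico (b (m + 1)) (b m) :=
      ⟨hgt.le, (hle.trans (hbranch.branchInv_mem_Icc ht).2).lt_of_ne (Ne.symm (hxb m))⟩
    exact ⟨hbranch.nonneg hxm, (hbranch.le_iff_le_branchInv ht hxm (Ne.symm (hxinv m))).mpr hle⟩

theorem pairwise_disjoint_Ioc_branchInv (hT : IsPiecewiseConvex T b d p) (ht : 0 ≤ t) :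
    (Finset.range p : Set ℕ).PairwiseDisjoint fun m =>
      Ioc (b (m + 1)) (branchInv T (b (m + 1)) (b m) t) := by
  have hdisj {i j : ℕ} (hij : i < j) (hj : j < p) :
      Disjoint (Ioc (b (j + 1)) (branchInv T (b (j + 1)) (b j) t))
        (Ioc (b (i + 1)) (branchInv T (b (i + 1)) (b i) t)) := by
    refine Ioc_disjoint_Ioc_of_le (((hT.branch j hj).branchInv_mem_Icc ht).2.trans ?_)
    exact hT.strictAntiOn.antitoneOn (mem_Iic.mpr (by omega)) hj.le hij
  intro i hi j hj hij
  rw [Finset.coe_range, mem_Iio] at hi hj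
  rcases hij.lt_or_gt with hlt | hlt
  · exact (hdisj hlt hj).symm
  · exact hdisj hlt hi

theorem cumulative_eq_cumulativeTransfer (hT : IsPiecewiseConvex T b d p) (hg : Integrable g lam)
    (hgg' : IsFrobeniusPerron T g g') :
    EqOn (cumulative g') (cumulativeTransfer T b p (cumulative g)) (Icc 0 1) := by
  intro t ht
  calc cumulative g' t = ∫ x in Icc 0 t, g' x ∂lam := by
        rw [lam, Measure.restrict_restrict_of_subset (Icc_subset_Icc_right ht.2),
          integral_Icc_eq_integral_Ioc, ← intervalIntegral.integral_of_le ht.1, cumulative]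
    _ = ∫ x in T ⁻¹' Icc 0 t, g x ∂lam := hgg' _ measurableSet_Icc (Icc_subset_Icc_right ht.2)
    _ = ∑ m ∈ Finset.range p,
          ∫ x in Ioc (b (m + 1)) (branchInv T (b (m + 1)) (b m) t), g x ∂lam := by
        rw [setIntegral_congr_set (hT.preimage_Icc_ae_eq ht.1)]
        exact integral_biUnion_finset _ (fun _ _ => measurableSet_Ioc)
          (hT.pairwise_disjoint_Ioc_branchInv ht.1) fun _ _ => hg.integrableOn
    _ = cumulativeTransfer T b p (cumulative g) t := Finset.sum_congr rfl fun m hm => by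
        rw [Finset.mem_range] at hm
        exact setIntegral_Ioc_lam hg (hT.mem_Icc hm).1 ((hT.branch m hm).branchInv_mem_Icc ht.1).1
          (hT.branchInv_mem_Icc hm ht.1).2

theorem monotoneOn_cumulativeTransfer (hT : IsPiecewiseConvex T b d p)
    (hF : MonotoneOn F (Icc 0 1)) : MonotoneOn (cumulativeTransfer T b p F) (Icc 0 1) := by
  refine fun s hs t ht hst => Finset.sum_le_sum fun m hm => sub_le_sub_right ?_ _
  rw [Finset.mem_range] at hm
  exact hF (hT.branchInv_mem_Icc hm hs.1) (hT.branchInv_mem_Icc hm ht.1)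
    ((hT.branch m hm).monotoneOn_branchInv hs.1 ht.1 hst)

theorem concaveOn_cumulativeTransfer (hT : IsPiecewiseConvex T b d p)
    (hF : ConcaveOn ℝ (Icc 0 1) F) (hmono : MonotoneOn F (Icc 0 1)) :
    ConcaveOn ℝ (Icc 0 1) (cumulativeTransfer T b p F) := by
  refine ⟨convex_Icc 0 1, fun s hs t ht q r hq hr hqr => ?_⟩
  have hst := convex_Icc (0 : ℝ) 1 hs ht hq hr hqr
  simp only [cumulativeTransfer, Finset.smul_sum, ← Finset.sum_add_distrib]
  refine Finset.sum_le_sum fun m hm => ?_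
  rw [Finset.mem_range] at hm
  set φ := branchInv T (b (m + 1)) (b m)
  have hφ {x : ℝ} (hx : x ∈ Icc (0 : ℝ) 1) : φ x ∈ Icc (0 : ℝ) 1 := hT.branchInv_mem_Icc hm hx.1
  have hcomp : q • F (φ s) + r • F (φ t) ≤ F (φ (q • s + r • t)) :=
    (hF.2 (hφ hs) (hφ ht) hq hr hqr).trans <|
      hmono (convex_Icc (0 : ℝ) 1 (hφ hs) (hφ ht) hq hr hqr) (hφ hst)
        ((hT.branch m hm).concaveOn_branchInv.2 hs.1 ht.1 hq hr hqr)
  simp only [smul_eq_mul] at hcomp ⊢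
  linear_combination hcomp - F (b (m + 1)) * hqr

theorem cumulativeTransfer_one_le (hT : IsPiecewiseConvex T b d p) (h0 : F 0 = 0)
    (hF : MonotoneOn F (Icc 0 1)) : cumulativeTransfer T b p F 1 ≤ F 1 := by
  calc cumulativeTransfer T b p F 1 ≤ ∑ m ∈ Finset.range p, (F (b m) - F (b (m + 1))) := by
        refine Finset.sum_le_sum fun m hm => sub_le_sub_right ?_ _
        rw [Finset.mem_range] at hm
        exact hF (hT.branchInv_mem_Icc hm zero_le_one) (hT.mem_Icc hm.le)
          ((hT.branch m hm).branchInv_mem_Icc zero_le_one).2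
    _ = F 1 := by rw [Finset.sum_range_sub', hT.zero, hT.last, h0, sub_zero]

theorem sub_le_mul_div (hT : IsPiecewiseConvex T b d p) (hF : ConcaveOn ℝ (Icc 0 1) F)
    (h0 : F 0 = 0) (hL0 : 0 ≤ L) (hL : ∀ t ∈ Icc (0 : ℝ) 1, F t ≤ L * t) (ht : 0 ≤ t) {m : ℕ}
    (hm : m < p) : F (branchInv T (b (m + 1)) (b m) t) - F (b (m + 1)) ≤ L * (t / d (m + 1)) :=
  (sub_le_mul_sub_of_concaveOn hF h0 hL (hT.mem_Icc hm).1
    ((hT.branch m hm).branchInv_mem_Icc ht).1 (hT.branchInv_mem_Icc hm ht).2).trans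
    (mul_le_mul_of_nonneg_left ((hT.branch m hm).branchInv_sub_le ht) hL0)

theorem sub_le_div_mul_div (hT : IsPiecewiseConvex T b d p) (hF : ConcaveOn ℝ (Icc 0 1) F)
    (hmono : MonotoneOn F (Icc 0 1)) (h0 : F 0 = 0) (ht : 0 ≤ t) {m : ℕ} (hm : m + 1 < p) :
    F (branchInv T (b (m + 1)) (b m) t) - F (b (m + 1)) ≤
      F 1 / b (m + 1) * (t / d (m + 1)) := by
  have hbranch := hT.branch m (by omega)
  have hb := hT.pos hm
  have hF0 : 0 ≤ F (b (m + 1)) := h0 ▸ hmono ⟨le_rfl, zero_le_one⟩ (hT.mem_Icc hm.le) hb.le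
  have hF1 : F (b (m + 1)) ≤ F 1 :=
    hmono (hT.mem_Icc hm.le) ⟨zero_le_one, le_rfl⟩ (hT.mem_Icc hm.le).2
  calc F (branchInv T (b (m + 1)) (b m) t) - F (b (m + 1))
      ≤ F (b (m + 1)) / b (m + 1) * (branchInv T (b (m + 1)) (b m) t - b (m + 1)) :=
        sub_le_div_mul_sub_of_concaveOn hF h0 hb (hbranch.branchInv_mem_Icc ht).1
          (hT.branchInv_mem_Icc (by omega) ht).2
    _ ≤ F (b (m + 1)) / b (m + 1) * (t / d (m + 1)) := by
        gcongr
        exact hbranch.branchInv_sub_le ht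
    _ ≤ F 1 / b (m + 1) * (t / d (m + 1)) := by
        have := hbranch.pos
        gcongr

theorem cumulativeTransfer_le (hT : IsPiecewiseConvex T b d p) (hN : N < p)
    (hF : ConcaveOn ℝ (Icc 0 1) F) (hmono : MonotoneOn F (Icc 0 1)) (h0 : F 0 = 0) (hL0 : 0 ≤ L)
    (hL : ∀ t ∈ Icc (0 : ℝ) 1, F t ≤ L * t) (ht : 0 ≤ t) :
    cumulativeTransfer T b p F t ≤
      ((∑ m ∈ Finset.Ico N p, 1 / d (m + 1)) * L + Dconst b d N * F 1) * t := by
  rw [cumulativeTransfer, ← Finset.sum_range_add_sum_Ico _ hN.le, add_mul, add_comm]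
  refine add_le_add ?_ ?_
  · rw [Finset.sum_mul, Finset.sum_mul]
    refine Finset.sum_le_sum fun m hm => ?_
    exact (hT.sub_le_mul_div hF h0 hL0 hL ht (Finset.mem_Ico.mp hm).2).trans_eq (by ring)
  · rw [Dconst, Finset.sum_mul, Finset.sum_mul]
    refine Finset.sum_le_sum fun m hm => ?_
    rw [Finset.mem_range] at hm
    refine (hT.sub_le_div_mul_div hF hmono h0 ht (by omega)).trans_eq ?_
    rw [one_div, mul_inv]
    ring

theorem hasConcaveCumulative (hT : IsPiecewiseConvex T b d p) (hg : HasConcaveCumulative g)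
    (hg' : Integrable g' lam) (hgg' : IsFrobeniusPerron T g g') : HasConcaveCumulative g' where
  integrable := hg'
  concaveOn := (hT.concaveOn_cumulativeTransfer hg.concaveOn hg.monotoneOn).congr
    (hT.cumulative_eq_cumulativeTransfer hg.integrable hgg').symm
  monotoneOn := (hT.monotoneOn_cumulativeTransfer hg.monotoneOn).congr
    (hT.cumulative_eq_cumulativeTransfer hg.integrable hgg').symm

theorem cumulative_one_le (hT : IsPiecewiseConvex T b d p) (hg : HasConcaveCumulative g)
    (hgg' : IsFrobeniusPerron T g g') : cumulative g' 1 ≤ cumulative g 1 :=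
  (hT.cumulative_eq_cumulativeTransfer hg.integrable hgg' ⟨zero_le_one, le_rfl⟩).trans_le
    (hT.cumulativeTransfer_one_le (cumulative_zero g) hg.monotoneOn)

theorem ae_le_of_ae_le (hT : IsPiecewiseConvex T b d p) (hN : N < p)
    (hg : HasConcaveCumulative g) (hg' : Integrable g' lam) (hgg' : IsFrobeniusPerron T g g')
    (hL0 : 0 ≤ L) (hL : ∀ᵐ x ∂lam, g x ≤ L) :
    ∀ᵐ x ∂lam, g' x ≤ (∑ m ∈ Finset.Ico N p, 1 / d (m + 1)) * L + Dconst b d N * cumulative g 1 :=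
  (hT.hasConcaveCumulative hg hg' hgg').ae_le fun _ ht =>
    (hT.cumulative_eq_cumulativeTransfer hg.integrable hgg' ht).trans_le <|
      hT.cumulativeTransfer_le hN hg.concaveOn hg.monotoneOn (cumulative_zero g) hL0
        (fun _ => cumulative_le_of_ae_le hg.integrable hL) ht.1

theorem Dconst_nonneg (hT : IsPiecewiseConvex T b d p) (hN : N < p) : 0 ≤ Dconst b d N := by
  refine Finset.sum_nonneg fun m hm => ?_
  rw [Finset.mem_range] at hm
  exact one_div_nonneg.mpr (mul_nonneg (hT.pos (by omega)).le (hT.branch m (by omega)).pos.le)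

theorem sum_one_div_nonneg (hT : IsPiecewiseConvex T b d p) :
    0 ≤ ∑ m ∈ Finset.Ico N p, 1 / d (m + 1) :=
  Finset.sum_nonneg fun m hm => one_div_nonneg.mpr (hT.branch m (Finset.mem_Ico.mp hm).2).pos.le

theorem ae_le_iterate (hT : IsPiecewiseConvex T b d p) (hN : N < p) {α M : ℝ}
    (hα : ∑ m ∈ Finset.Ico N p, 1 / d (m + 1) ≤ α) (hα1 : α < 1) {g : ℕ → ℝ → ℝ}
    (hint : ∀ k, Integrable (g k) lam) (hiter : ∀ k, IsFrobeniusPerron T (g k) (g (k + 1)))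
    (hg : HasConcaveCumulative (g 0)) (hM : cumulative (g 0) 1 ≤ M) (hL0 : 0 ≤ L)
    (hL : ∀ᵐ x ∂lam, g 0 x ≤ L) (k : ℕ) :
    ∀ᵐ x ∂lam, g k x ≤ α ^ k * L + Dconst b d N / (1 - α) * M := by
  have hα0 : 0 ≤ α := hT.sum_one_div_nonneg.trans hα
  have hα' : 0 < 1 - α := sub_pos.mpr hα1
  have hD : 0 ≤ Dconst b d N := hT.Dconst_nonneg hN
  have hM0 : 0 ≤ M := hg.cumulative_one_nonneg.trans hM
  have hconcave (k) : HasConcaveCumulative (g k) := by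
    induction k with
    | zero => exact hg
    | succ k ih => exact hT.hasConcaveCumulative ih (hint _) (hiter k)
  have hmass (k) : cumulative (g k) 1 ≤ M :=
    (antitone_nat_of_succ_le (f := fun k => cumulative (g k) 1)
      (fun k => hT.cumulative_one_le (hconcave k) (hiter k)) (Nat.zero_le k)).trans hM
  induction k with
  | zero =>
    filter_upwards [hL] with x hx
    have : 0 ≤ Dconst b d N / (1 - α) * M := by positivity
    linarith
  | succ k ih =>
    have hbound := hT.ae_le_of_ae_le hN (hconcave k) (hint _) (hiter k) (by positivity) ih
    filter_upwards [hbound] with x hx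
    calc g (k + 1) x
        ≤ α * (α ^ k * L + Dconst b d N / (1 - α) * M) + Dconst b d N * M :=
          hx.trans (by gcongr; exact hmass k)
      _ = α ^ (k + 1) * L + Dconst b d N / (1 - α) * M := by
          field_simp
          ring

end IsPiecewiseConvex

theorem esssup_ne_top_of_antitoneOn (hg : AntitoneOn g (Icc 0 1)) : esssup g ≠ ⊤ := by
  refine ne_top_of_le_ne_top (ENNReal.ofReal_ne_top (r := g 0)) (essSup_le_of_ae_le _ ?_)
  filter_upwards [ae_restrict_mem measurableSet_Icc] with x hx
  exact ENNReal.ofReal_le_ofReal (hg ⟨le_rfl, zero_le_one⟩ hx hx.1)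

theorem ae_le_toReal_esssup (hg : esssup g ≠ ⊤) : ∀ᵐ x ∂lam, g x ≤ (esssup g).toReal := by
  filter_upwards [ENNReal.ae_le_essSup fun x => ENNReal.ofReal (g x)] with x hx
  exact (ENNReal.ofReal_le_iff_le_toReal hg).mp hx

theorem esssup_le_of_ae_le (hL : ∀ᵐ x ∂lam, g x ≤ L) : esssup g ≤ ENNReal.ofReal L :=
  essSup_le_of_ae_le _ (hL.mono fun _ hx => ENNReal.ofReal_le_ofReal hx)

theorem stmt9_general (hT : IsPiecewiseConvex T b d p) (hN : N < p) {α : ℝ}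
    (hα : ∑ m ∈ Finset.Ico N p, 1 / d (m + 1) ≤ α) (hα1 : α < 1) {g : ℕ → ℝ → ℝ}
    (hint : ∀ k, Integrable (g k) lam) (h0 : ∀ x ∈ Icc (0 : ℝ) 1, 0 ≤ g 0 x)
    (hanti : AntitoneOn (g 0) (Icc 0 1))
    (hiter : ∀ k, IsFrobeniusPerron T (g k) (g (k + 1))) (k : ℕ) :
    esssup (g k) ≤ ENNReal.ofReal (α ^ k) * esssup (g 0)
      + ENNReal.ofReal (Dconst b d N / (1 - α) * ∫ x, |g 0 x| ∂lam) := by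
  have hfin := esssup_ne_top_of_antitoneOn hanti
  have hα0 : 0 ≤ α := hT.sum_one_div_nonneg.trans hα
  have hae := hT.ae_le_iterate hN hα hα1 hint hiter (.of_antitoneOn (hint 0) h0 hanti)
    (cumulative_one_le_integral_abs (hint 0)) ENNReal.toReal_nonneg (ae_le_toReal_esssup hfin) k
  refine (esssup_le_of_ae_le hae).trans (ENNReal.ofReal_add_le.trans_eq ?_)
  rw [ENNReal.ofReal_mul (pow_nonneg hα0 k), ENNReal.ofReal_toReal hfin]

end PiecewiseConvex

namespace PCApprox

variable {τ : ℝ → ℝ} {a d : ℕ → ℝ} {N n₀ n : ℕ}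

theorem pos (hτ : PCApprox τ a d N) (m : ℕ) : 0 < a m :=
  (hτ.a_anti.antitone.le_of_tendsto hτ.a_lim (m + 1)).trans_lt (hτ.a_anti m.lt_succ_self)

theorem isConvexBranch_tauN (hτ : PCApprox τ a d N) {m : ℕ} (hm : m < n) :
    IsConvexBranch (tauN τ a n) (a (m + 1)) (a m) (d (m + 1)) := by
  have hmem : a (m + 1) ∈ Ico (a (m + 1)) (a m) := ⟨le_rfl, hτ.a_anti m.lt_succ_self⟩
  have heq : EqOn (tauN τ a n) τ (Ico (a (m + 1)) (a m)) := fun x hx =>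
    if_neg (((hτ.a_anti.antitone hm).trans hx.1).not_gt)
  exact ⟨hmem.2, (hτ.conv m).congr heq.symm, (heq hmem).trans (hτ.map_a m),
    ((hτ.deriv_a m).mono Ico_subset_Ici_self).congr heq (heq hmem), hτ.d_pos m⟩

theorem isConvexBranch_tauN_zero (hτ : PCApprox τ a d N) (n : ℕ) :
    IsConvexBranch (tauN τ a n) 0 (a n) (1 / a n) := by
  have hpos := hτ.pos n
  have hmem : (0 : ℝ) ∈ Ico 0 (a n) := ⟨le_rfl, hpos⟩
  have heq : EqOn (tauN τ a n) (fun x => x / a n) (Ico 0 (a n)) := fun x hx => if_pos hx.2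
  have hconv : ConvexOn ℝ (Ico 0 (a n)) fun x => x / a n :=
    (LinearMap.mulRight ℝ (a n)⁻¹).convexOn (convex_Ico _ _)
  exact ⟨hpos, hconv.congr heq.symm, (heq hmem).trans (zero_div _),
    ((hasDerivAt_id (0 : ℝ)).div_const (a n)).hasDerivWithinAt.congr heq (heq hmem),
    one_div_pos.mpr hpos⟩

theorem isPiecewiseConvex_tauN (hτ : PCApprox τ a d N) (n : ℕ) :
    IsPiecewiseConvex (tauN τ a n) (Function.update a (n + 1) 0)
      (Function.update d (n + 1) (1 / a n)) (n + 1) where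
  zero := by simp [hτ.a_zero]
  last := Function.update_self ..
  branch m hm := by
    rcases (Nat.lt_succ_iff.mp hm).eq_or_lt with rfl | hlt
    · simpa using hτ.isConvexBranch_tauN_zero m
    · simpa [hlt.ne, hm.ne] using hτ.isConvexBranch_tauN hlt

theorem sum_one_div_update_le (hτ : PCApprox τ a d N) (hn₀ : N ≤ n₀) (hn : n₀ ≤ n) :
    ∑ m ∈ Finset.Ico N (n + 1), 1 / Function.update d (n + 1) (1 / a n) (m + 1) ≤
      a n₀ + D₁ d N := by
  have hsummable : Summable fun m => 1 / d (m + N + 1) := (summable_nat_add_iff N).mpr hτ.sum_d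
  have htail : ∑ m ∈ Finset.Ico N n, 1 / d (m + 1) ≤ D₁ d N := by
    rw [Finset.sum_Ico_eq_sum_range]
    simp only [add_comm N]
    exact hsummable.sum_le_tsum _ fun m _ => one_div_nonneg.mpr (hτ.d_pos (m + N)).le
  rw [Finset.sum_Ico_succ_top (hn₀.trans hn), Function.update_self, one_div_one_div, add_comm]
  refine add_le_add (hτ.a_anti.antitone hn) (htail.trans_eq' (Finset.sum_congr rfl fun m hm => ?_))
  rw [Function.update_of_ne (by have := (Finset.mem_Ico.mp hm).2; omega)]

end PCApprox

theorem Dconst_update (a d : ℕ → ℝ) {N n : ℕ} (hN : N ≤ n) (x y : ℝ) :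
    Dconst (Function.update a (n + 1) x) (Function.update d (n + 1) y) N = Dconst a d N := by
  refine Finset.sum_congr rfl fun m hm => ?_
  have hne : m + 1 ≠ n + 1 := by
    rw [Finset.mem_range] at hm
    omega
  rw [Function.update_of_ne hne, Function.update_of_ne hne]

/-- Let `n₀ ≥ N` satisfy `a n₀ + D₁ < 1` and let `n ≥ n₀`. For every non-negative,
non-increasing `f ∈ L¹` and every `k ≥ 1`, the `k`-th iterate of the Frobenius–Perron
operator of `τ_n` (realized as a sequence `g` of versions with `g 0 = f` and `g (k+1)` a
version of `P_{τ_n} (g k)`) satisfies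
`ess sup (P_{τ_n}^k f) ≤ (a n₀ + D₁)^k · ess sup f + (D / (1 − (a n₀ + D₁))) · ‖f‖₁`. -/
theorem stmt9 (τ : ℝ → ℝ) (a d : ℕ → ℝ) (N : ℕ)
    (hτ : PCApprox τ a d N) (n₀ : ℕ) (hn₀ : N ≤ n₀) (hcontr : a n₀ + D₁ d N < 1)
    (n : ℕ) (hn : n₀ ≤ n)
    (f : ℝ → ℝ) (g : ℕ → ℝ → ℝ)
    (hg0 : g 0 = f)
    (hint : ∀ k : ℕ, MeasureTheory.Integrable (g k) lam)
    (hf_nonneg : ∀ x ∈ Set.Icc (0:ℝ) 1, 0 ≤ f x)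
    (hf_mono : AntitoneOn f (Set.Icc 0 1))
    (hiter : ∀ k : ℕ, ∀ A : Set ℝ, MeasurableSet A → A ⊆ Set.Icc 0 1 →
      ∫ x in A, g (k+1) x ∂lam = ∫ x in (tauN τ a n) ⁻¹' A, g k x ∂lam) :
    ∀ k : ℕ, 1 ≤ k →
      esssup (g k) ≤ ENNReal.ofReal ((a n₀ + D₁ d N) ^ k) * esssup f
        + ENNReal.ofReal ((Dconst a d N / (1 - (a n₀ + D₁ d N))) * ∫ x, |f x| ∂lam) := by
  subst hg0
  intro k _
  rw [← Dconst_update a d (hn₀.trans hn) 0 (1 / a n)]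
  exact stmt9_general (hτ.isPiecewiseConvex_tauN n) (Nat.lt_succ_of_le (hn₀.trans hn))
    (hτ.sum_one_div_update_le hn₀ hn) hcontr hint hf_nonneg hf_mono hiter k
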